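/- Proposition 4.2 (convergence of the penalized correctors): Let d ≥ 2, assume W satisfies the double-well assumptions and let q be the standing wave. Fix a unit vector e ∈ ℝ^d with e ∉ ℝℤ^d. Let m̃₂ : ℝ × ℝ^d → ℝ be bounded, ℤ^d-periodic in its second argument, α-Hölder continuous for some α ∈ (0,1), and satisfy ∫_{[0,1]^d} m̃₂(s,y) dy = 0 for every s ∈ ℝ. For each δ > 0 let V^δ : ℝ × ℝ^d → ℝ be a bounded C² function, ℤ^d-periodic in its second argument, solving m̃₂(s,y) + δV^δ − (∂²_s V^δ + 2⟨e, D_y ∂_s V^δ⟩ + Δ_y V^δ) − (2q''(s)/q'(s)) (∂_s V^δ(s,y) + ⟨e, D_y V^δ(s,y)⟩) = 0 on ℝ × ℝ^d. Then sup_{(s,y) ∈ ℝ × ℝ^d} |δ V^δ(s,y)| → 0 as δ → 0⁺. Equivalently, the penalized correctors P^δ = V^δ(s,y) q'(s) satisfy sup |δ P^δ / q'| → 0. -/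

import Mathlib

open Set Filter Topology MeasureTheory RealInnerProductSpace

noncomputable section

abbrev Euc (d : ℕ) := EuclideanSpace ℝ (Fin d)

def IsIntVec {d : ℕ} (z : Euc d) : Prop := ∀ i, ∃ n : ℤ, z i = (n : ℝ)

/-- p ∈ ℝℤ^d, i.e. p is a real multiple of an integer vector. -/
def RatDir {d : ℕ} (p : Euc d) : Prop :=
  ∃ (c : ℝ) (k : Fin d → ℤ), ∀ i, p i = c * (k i : ℝ)

def unitCube (d : ℕ) : Set (Euc d) := {y | ∀ i, y i ∈ Set.Icc (0:ℝ) 1}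

noncomputable def clTrace {d : ℕ} (A : Euc d →L[ℝ] Euc d) : ℝ :=
  LinearMap.trace ℝ (Euc d) (A : Euc d →ₗ[ℝ] Euc d)

/-- ∂_s V (s,y). -/
noncomputable def dS {d : ℕ} (V : ℝ × Euc d → ℝ) (s : ℝ) (y : Euc d) : ℝ :=
  deriv (fun s' => V (s', y)) s

/-- ∂²_s V (s,y). -/
noncomputable def dSS {d : ℕ} (V : ℝ × Euc d → ℝ) (s : ℝ) (y : Euc d) : ℝ :=
  deriv (fun s' => deriv (fun s'' => V (s'', y)) s') s

/-- D_y V (s,y). -/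
noncomputable def gradY {d : ℕ} (V : ℝ × Euc d → ℝ) (s : ℝ) (y : Euc d) : Euc d :=
  gradient (fun y' => V (s, y')) y

/-- ⟨e, D_y ∂_s V⟩ (s,y). -/
noncomputable def mixedDeriv {d : ℕ} (e : Euc d) (V : ℝ × Euc d → ℝ) (s : ℝ) (y : Euc d) : ℝ :=
  ⟪e, gradient (fun y' => deriv (fun s' => V (s', y')) s) y⟫

/-- Δ_y V (s,y). -/
noncomputable def lapY {d : ℕ} (V : ℝ × Euc d → ℝ) (s : ℝ) (y : Euc d) : ℝ :=
  clTrace (fderiv ℝ (fun y' => gradient (fun z => V (s, z)) y') y)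

def DoubleWell (W : ℝ → ℝ) : Prop :=
  ContDiff ℝ 3 W ∧
  (∀ u ∈ Set.Icc (-1:ℝ) 1, 0 ≤ W u) ∧
  W (-1) = 0 ∧ W 1 = 0 ∧
  (∀ u ∈ Set.Ioo (-1:ℝ) 1, 0 < W u) ∧
  deriv W (-1) = 0 ∧ deriv W 0 = 0 ∧ deriv W 1 = 0 ∧
  (∀ u ∈ Set.Ioo (-1:ℝ) 0, 0 < deriv W u) ∧
  (∀ u ∈ Set.Ioo (0:ℝ) 1, deriv W u < 0) ∧
  0 < deriv (deriv W) (-1) ∧ 0 < deriv (deriv W) 1 ∧ deriv (deriv W) 0 < 0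

def StandingWave (W q : ℝ → ℝ) : Prop :=
  ContDiff ℝ 2 q ∧ StrictMono q ∧ (∀ s, q s ∈ Set.Ioo (-1:ℝ) 1) ∧ q 0 = 0 ∧
  (∀ s, deriv (deriv q) s = deriv W (q s)) ∧
  Filter.Tendsto q Filter.atTop (nhds 1) ∧ Filter.Tendsto q Filter.atBot (nhds (-1))

/-!
The second order part of the equation is the degenerate operator `(∂_s + ∂_e)² + ∑ ∂²_τ`, with `τ`
in an orthonormal basis of `e^⊥`, and the drift `β(s) (∂_s + ∂_e)`, where `β = 2 q'' / q'`, points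
to `{s = 0}`. Hence the squared norm of `(s, y - s e)` is a Lyapunov function and maximum principles
hold on the whole space: a solution with right-hand side `f` satisfies `|δ w| ≤ sup |f|`.

Translating the equation, the `z` with `δ (V^δ(s, y + z) - V^δ(s, y)) → 0` uniformly form a closed
group. It contains `ℤ^d` by periodicity and `e^⊥` by a mirror coupling of two copies of the
diffusion, which bounds the difference by a constant times `√δ |z|`. As `e` is irrational, the group
is everything. So `δ V^δ` differs by `o(1)` from `δ` times the solutions whose right-hand sides are
averages of translates of `m̃₂`; since the mean over a cell vanishes, some average is uniformly
small, and so is `δ V^δ` by the maximum principle.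
-/

section SecondDerivativeTest

theorem deriv_deriv_nonpos_of_isLocalMax {f : ℝ → ℝ} {a : ℝ} (h : IsLocalMax f a)
    (hf : ContinuousAt f a) : deriv (deriv f) a ≤ 0 := by
  by_contra! hpos
  have hmin : IsLocalMin f a := isLocalMin_of_deriv_deriv_pos hpos h.deriv_eq_zero hf
  have hconst : f =ᶠ[𝓝 a] fun _ => f a := by
    filter_upwards [h, hmin] with t hle hge using le_antisymm hle hge
  have hzero : deriv (deriv f) a = 0 := by simpa using hconst.deriv.deriv_eq
  exact hpos.ne' hzero

variable {F : Type*} [NormedAddCommGroup F] [NormedSpace ℝ F]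

theorem iteratedFDeriv_two_nonpos_of_isLocalMax {w : F → ℝ} {p : F} (hw : ContDiff ℝ 2 w)
    (h : IsLocalMax w p) (v : F) : iteratedFDeriv ℝ 2 w p (fun _ => v) ≤ 0 := by
  let line : ℝ →L[ℝ] F := .toSpanSingleton ℝ v
  have hw' : ContDiff ℝ 2 fun x => w (x + p) := hw.comp (contDiff_id.add contDiff_const)
  have hcont : Continuous fun t => line t + p := by fun_prop
  have hmax : IsLocalMax ((fun x => w (x + p)) ∘ line) 0 :=
    IsLocalMax.comp_continuous (g := fun t => line t + p) (by simpa using h) hcont.continuousAt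
  have hderiv : iteratedDeriv 2 ((fun x => w (x + p)) ∘ line) 0 =
      iteratedFDeriv ℝ 2 w p fun _ => v := by
    rw [iteratedDeriv_eq_iteratedFDeriv, line.iteratedFDeriv_comp_right hw' 0 le_rfl,
      iteratedFDeriv_comp_add_right]
    simp [line]
  rw [← hderiv, iteratedDeriv_succ, iteratedDeriv_one]
  exact deriv_deriv_nonpos_of_isLocalMax hmax (hw'.continuous.comp line.continuous).continuousAt

end SecondDerivativeTest

section Diffusion

variable {F G ι : Type*} [NormedAddCommGroup F] [NormedSpace ℝ F] [NormedAddCommGroup G]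
  [NormedSpace ℝ G] [Fintype ι] {v : ι → F} {b p : F} {w u : F → ℝ}

/-- The degenerate elliptic operator `∑ i, ∂²_{v i} + ∂_b` with directions `v` and drift `b`,
applied to `w` at `p`. The drift is a vector rather than a vector field, as only its value at `p`
matters. -/
def diffusion (v : ι → F) (b : F) (w : F → ℝ) (p : F) : ℝ :=
  ∑ i, iteratedFDeriv ℝ 2 w p (fun _ => v i) + fderiv ℝ w p b

theorem diffusion_add (hw : ContDiff ℝ 2 w) (hu : ContDiff ℝ 2 u) :
    diffusion v b (w + u) p = diffusion v b w p + diffusion v b u p := by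
  simp only [diffusion, iteratedFDeriv_add_apply hw.contDiffAt hu.contDiffAt,
    fderiv_add (hw.differentiable two_ne_zero p) (hu.differentiable two_ne_zero p),
    _root_.add_apply, Finset.sum_add_distrib]
  ring

theorem diffusion_const_smul (k : ℝ) (hw : ContDiff ℝ 2 w) :
    diffusion v b (k • w) p = k * diffusion v b w p := by
  simp only [diffusion, iteratedFDeriv_const_smul_apply hw.contDiffAt,
    fderiv_const_smul (hw.differentiable two_ne_zero p), _root_.smul_apply, smul_eq_mul,
    ← Finset.mul_sum, mul_add]

theorem diffusion_sub (hw : ContDiff ℝ 2 w) (hu : ContDiff ℝ 2 u) :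
    diffusion v b (w - u) p = diffusion v b w p - diffusion v b u p := by
  have hneg : ContDiff ℝ 2 ((-1 : ℝ) • u) := hu.const_smul (-1 : ℝ)
  rw [sub_eq_add_neg, ← neg_one_smul ℝ u, diffusion_add hw hneg, diffusion_const_smul (-1) hu]
  ring

theorem diffusion_comp_add_right (z : F) :
    diffusion v b (fun x => w (x + z)) p = diffusion v b w (p + z) := by
  simp only [diffusion, iteratedFDeriv_comp_add_right, fderiv_comp_add_right]

theorem diffusion_comp (A : G →L[ℝ] F) (hw : ContDiff ℝ 2 w) (v : ι → G) (b p : G) :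
    diffusion v b (w ∘ A) p = diffusion (fun i => A (v i)) (A b) w (A p) := by
  simp only [diffusion, A.iteratedFDeriv_comp_right hw p le_rfl,
    fderiv_comp p (hw.differentiable two_ne_zero (A p)) A.differentiableAt, A.fderiv]
  rfl

theorem diffusion_congr_sign {v' : ι → F} (h : ∀ i, v' i = v i ∨ v' i = -v i) :
    diffusion v' b w p = diffusion v b w p := by
  refine congrArg (· + fderiv ℝ w p b) (Finset.sum_congr rfl fun i _ => ?_)
  rcases h i with hi | hi <;> simp [iteratedFDeriv_two_apply, hi]

theorem diffusion_nonpos_of_isLocalMax (hw : ContDiff ℝ 2 w) (h : IsLocalMax w p) :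
    diffusion v b w p ≤ 0 := by
  rw [diffusion, h.fderiv_eq_zero, _root_.zero_apply, add_zero]
  exact Finset.sum_nonpos fun i _ => iteratedFDeriv_two_nonpos_of_isLocalMax hw h (v i)

end Diffusion

section MaximumPrinciple

variable {F H ι : Type*} [NormedAddCommGroup F] [NormedSpace ℝ F] [NormedAddCommGroup H]
  [InnerProductSpace ℝ H] [Fintype ι] {v : ι → F} {B : F → F} {χ w : F → ℝ}

/-- A Lyapunov function for the operator `∑ i, ∂²_{v i} + ∂_B`: a coercive function on which the
operator is bounded above. It prevents the diffusion from exploding, and thereby yields maximum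
principles for bounded functions on unbounded domains. -/
structure IsLyapunov (v : ι → F) (B : F → F) (χ : F → ℝ) : Prop where
  contDiff : ContDiff ℝ 2 χ
  nonneg : ∀ p, 0 ≤ χ p
  coercive : Tendsto χ (cocompact F) atTop
  diffusion_le : ∃ C, 0 ≤ C ∧ ∀ p, diffusion v (B p) χ p ≤ C

theorem diffusion_norm_sq (v : ι → H) (b x : H) :
    diffusion v b (fun y => ‖y‖ ^ 2) x = ∑ i, 2 * ‖v i‖ ^ 2 + 2 * ⟪x, b⟫ := by
  have hfderiv (y : H) : fderiv ℝ (fun y : H => ‖y‖ ^ 2) y = ((2 : ℝ) • innerSL ℝ) y := by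
    simp [two_smul]
  have hhess : fderiv ℝ (fderiv ℝ fun y : H => ‖y‖ ^ 2) x = (2 : ℝ) • innerSL ℝ := by
    rw [funext hfderiv]
    exact ContinuousLinearMap.fderiv _
  have hinner (y z : H) : ((2 : ℝ) • innerSL ℝ (E := H)) y z = 2 * ⟪y, z⟫ := rfl
  simp only [diffusion, iteratedFDeriv_two_apply, hhess, hfderiv, hinner,
    real_inner_self_eq_norm_sq]

theorem IsLyapunov.of_norm_sq [FiniteDimensional ℝ H] (A : F ≃L[ℝ] H)
    (hAB : ∀ p, ⟪A p, A (B p)⟫ ≤ 0) : IsLyapunov v B fun p => ‖A p‖ ^ 2 where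
  contDiff := (contDiff_norm_sq ℝ).comp A.contDiff
  nonneg p := sq_nonneg _
  coercive := (tendsto_pow_atTop two_ne_zero).comp
    (tendsto_norm_cocompact_atTop.comp A.toHomeomorph.isClosedEmbedding.tendsto_cocompact)
  diffusion_le := by
    refine ⟨∑ i, 2 * ‖A (v i)‖ ^ 2, by positivity, fun p => ?_⟩
    calc diffusion v (B p) (fun p => ‖A p‖ ^ 2) p
        = diffusion (fun i => A (v i)) (A (B p)) (fun y => ‖y‖ ^ 2) (A p) :=
          diffusion_comp (A : F →L[ℝ] H) (contDiff_norm_sq ℝ) v (B p) p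
      _ = ∑ i, 2 * ‖A (v i)‖ ^ 2 + 2 * ⟪A p, A (B p)⟫ := diffusion_norm_sq _ _ _
      _ ≤ ∑ i, 2 * ‖A (v i)‖ ^ 2 := by linarith [hAB p]

theorem exists_isMaxOn_of_bddAbove_sub_coercive {X : Type*} [TopologicalSpace X] {s : Set X}
    {f g : X → ℝ} {M : ℝ} (hs : IsClosed s) (hne : s.Nonempty) (hf : Continuous f)
    (hg : Continuous g) (hfM : ∀ x ∈ s, f x ≤ M) (hcoercive : Tendsto g (cocompact X) atTop) :
    ∃ m ∈ s, IsMaxOn (f - g) s m := by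
  obtain ⟨x₀, hx₀⟩ := hne
  refine (hf.sub hg).continuousOn.exists_isMaxOn' hs hx₀ (eventually_inf_principal.2 ?_)
  filter_upwards [hcoercive.eventually_ge_atTop (M - (f - g) x₀)] with x hgx hxs
  have := hfM x hxs
  simp only [Pi.sub_apply] at hgx ⊢
  linarith

/-- Subtracting a small multiple of the Lyapunov function makes `w` attain its maximum, where the
pointwise argument applies. -/
theorem IsLyapunov.mul_le_of_le_diffusion (hχ : IsLyapunov v B χ) {Ω : Set F} (hΩ : IsOpen Ω)
    {δ K M : ℝ} (hδ : 0 < δ) (hw : ContDiff ℝ 2 w) (hwM : ∀ p ∈ closure Ω, w p ≤ M)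
    (hfrontier : ∀ p ∈ frontier Ω, δ * w p ≤ K)
    (hsub : ∀ p ∈ Ω, δ * w p ≤ diffusion v (B p) w p + K) {p : F} (hp : p ∈ closure Ω) :
    δ * w p ≤ K := by
  obtain ⟨C, hC, hχC⟩ := hχ.diffusion_le
  have hperturbed : ∀ κ > 0, δ * w p ≤ K + κ * (C + δ * χ p) := by
    intro κ hκ
    obtain ⟨m, hm, hmax⟩ := exists_isMaxOn_of_bddAbove_sub_coercive isClosed_closure ⟨p, hp⟩
      hw.continuous (hχ.contDiff.continuous.const_smul κ) hwM
      (hχ.coercive.const_mul_atTop hκ)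
    have hpm : w p - κ * χ p ≤ w m - κ * χ m := hmax hp
    suffices hwm : δ * w m ≤ K + κ * C by
      have := mul_le_mul_of_nonneg_left hpm hδ.le
      have : 0 ≤ δ * (κ * χ m) := by have := hχ.nonneg m; positivity
      linarith
    by_cases hmΩ : m ∈ Ω
    · have hlocal : IsLocalMax (w - κ • χ) m :=
        hmax.isLocalMax (mem_of_superset (hΩ.mem_nhds hmΩ) subset_closure)
      have hκχ : ContDiff ℝ 2 (κ • χ) := hχ.contDiff.const_smul κ
      have hnonpos : diffusion v (B m) (w - κ • χ) m ≤ 0 :=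
        diffusion_nonpos_of_isLocalMax (hw.sub hκχ) hlocal
      rw [diffusion_sub hw hκχ, diffusion_const_smul κ hχ.contDiff] at hnonpos
      have := mul_le_mul_of_nonneg_left (hχC m) hκ.le
      linarith [hsub m hmΩ]
    · have := hfrontier m ⟨hm, by rwa [hΩ.interior_eq]⟩
      have := mul_nonneg hκ.le hC
      linarith
  have hlim : Tendsto (fun κ => K + κ * (C + δ * χ p)) (𝓝[>] 0) (𝓝 K) := by
    have : Continuous fun κ => K + κ * (C + δ * χ p) := by fun_prop
    simpa using (this.tendsto 0).mono_left nhdsWithin_le_nhds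
  exact ge_of_tendsto hlim (eventually_mem_nhdsWithin.mono hperturbed)

end MaximumPrinciple

section PenalizedSolution

variable {F ι : Type*} [NormedAddCommGroup F] [NormedSpace ℝ F] [Fintype ι] {v : ι → F}
  {B : F → F} {χ f g w u : F → ℝ} {δ K : ℝ}

/-- `w` is a bounded `C²` solution of `f + δ w - (∑ i, ∂²_{v i} w + ∂_B w) = 0`. -/
structure IsPenalizedSolution (v : ι → F) (B : F → F) (δ : ℝ) (f w : F → ℝ) : Prop where
  bounded : ∃ M, ∀ p, |w p| ≤ M
  contDiff : ContDiff ℝ 2 w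
  eqn : ∀ p, f p + δ * w p = diffusion v (B p) w p

namespace IsPenalizedSolution

theorem add (hw : IsPenalizedSolution v B δ f w) (hu : IsPenalizedSolution v B δ g u) :
    IsPenalizedSolution v B δ (f + g) (w + u) where
  bounded := by
    obtain ⟨M, hM⟩ := hw.bounded
    obtain ⟨N, hN⟩ := hu.bounded
    exact ⟨M + N, fun p => (abs_add_le _ _).trans (add_le_add (hM p) (hN p))⟩
  contDiff := hw.contDiff.add hu.contDiff
  eqn p := by
    rw [diffusion_add hw.contDiff hu.contDiff, ← hw.eqn, ← hu.eqn]
    simp only [Pi.add_apply]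
    ring

theorem const_smul (k : ℝ) (hw : IsPenalizedSolution v B δ f w) :
    IsPenalizedSolution v B δ (k • f) (k • w) where
  bounded := by
    obtain ⟨M, hM⟩ := hw.bounded
    refine ⟨|k| * M, fun p => ?_⟩
    rw [Pi.smul_apply, smul_eq_mul, abs_mul]
    exact mul_le_mul_of_nonneg_left (hM p) (abs_nonneg k)
  contDiff := hw.contDiff.const_smul k
  eqn p := by
    rw [diffusion_const_smul k hw.contDiff, ← hw.eqn]
    simp only [Pi.smul_apply, smul_eq_mul]
    ring

theorem translate {z : F} (hB : ∀ p, B (p + z) = B p) (hw : IsPenalizedSolution v B δ f w) :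
    IsPenalizedSolution v B δ (fun p => f (p + z)) (fun p => w (p + z)) where
  bounded := hw.bounded.imp fun _ hM p => hM (p + z)
  contDiff := hw.contDiff.comp (contDiff_id.add contDiff_const)
  eqn p := by rw [diffusion_comp_add_right, hw.eqn, hB]

theorem mul_le (hw : IsPenalizedSolution v B δ f w) (hχ : IsLyapunov v B χ) (hδ : 0 < δ)
    (hf : ∀ p, -f p ≤ K) (p : F) : δ * w p ≤ K := by
  obtain ⟨M, hM⟩ := hw.bounded
  refine hχ.mul_le_of_le_diffusion isOpen_univ hδ hw.contDiff
    (fun p _ => (le_abs_self _).trans (hM p)) (by simp) (fun p _ => ?_) (by simp)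
  linarith [hw.eqn p, hf p]

theorem abs_mul_le (hw : IsPenalizedSolution v B δ f w) (hχ : IsLyapunov v B χ) (hδ : 0 < δ)
    (hf : ∀ p, |f p| ≤ K) (p : F) : |δ * w p| ≤ K := by
  refine abs_le'.2 ⟨hw.mul_le hχ hδ (fun p => (neg_le_abs _).trans (hf p)) p, ?_⟩
  have hneg := (hw.const_smul (-1)).mul_le hχ hδ (K := K)
    (fun p => by simpa using (le_abs_self _).trans (hf p)) p
  simpa using hneg

end IsPenalizedSolution

end PenalizedSolution

section Reflection

variable {F ι : Type*} [NormedAddCommGroup F] [NormedSpace ℝ F] [Fintype ι]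
  {v : ι → F} {j : ι} {B : F → F} {χ w f : F → ℝ} {δ K : ℝ}

/-- The position `x + r • u` of a point reached from `x` by moving a distance `r` along `u`. -/
def slide (u : F) : F × ℝ →L[ℝ] F :=
  .fst ℝ F ℝ + (ContinuousLinearMap.snd ℝ F ℝ).smulRight u

@[simp]
theorem slide_apply (u : F) (p : F × ℝ) : slide u p = p.1 + p.2 • u := rfl

/-- The directions of the mirror coupling of two copies `x ± r • v j` of a diffusion with
directions `v`: the direction `v j` only moves the separation `r`, the others only the midpoint
`x`. -/
def mirrorDir [DecidableEq ι] (v : ι → F) (j i : ι) : F × ℝ := if i = j then (0, 1) else (v i, 0)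

theorem diffusion_mirrorDir_comp_slide [DecidableEq ι] {u : F} (hu : u = v j ∨ u = -v j)
    (hw : ContDiff ℝ 2 w) (b : F) (p : F × ℝ) :
    diffusion (mirrorDir v j) (b, 0) (w ∘ slide u) p = diffusion v b w (slide u p) := by
  rw [diffusion_comp (slide u) hw, show slide u (b, 0) = b by simp]
  refine diffusion_congr_sign fun i => ?_
  by_cases hi : i = j <;> simp [mirrorDir, hi, hu]

theorem diffusion_mirrorDir_comp_snd [DecidableEq ι] {h : ℝ → ℝ} (hh : ContDiff ℝ 2 h) (b : F)
    (p : F × ℝ) :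
    diffusion (mirrorDir v j) (b, 0) (h ∘ Prod.snd) p = deriv (deriv h) p.2 := by
  have hcomp := diffusion_comp (.snd ℝ F ℝ) hh (mirrorDir v j) (b, 0) p
  have hdir (i : ι) : iteratedFDeriv ℝ 2 h p.2 (fun _ => (mirrorDir v j i).2) =
      if i = j then deriv (deriv h) p.2 else 0 := by
    rw [iteratedFDeriv_apply_eq_iteratedDeriv_mul_prod, iteratedDeriv_succ, iteratedDeriv_one]
    by_cases hi : i = j <;> simp [mirrorDir, hi]
  simpa [diffusion, hdir] using hcomp

theorem tendsto_add_cocompact_prod_atTop {X Y : Type*} [TopologicalSpace X] [TopologicalSpace Y]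
    {f : X → ℝ} {g : Y → ℝ} (hf₀ : ∀ x, 0 ≤ f x) (hg₀ : ∀ y, 0 ≤ g y)
    (hf : Tendsto f (cocompact X) atTop) (hg : Tendsto g (cocompact Y) atTop) :
    Tendsto (fun p : X × Y => f p.1 + g p.2) (cocompact (X × Y)) atTop := by
  rw [← coprod_cocompact, Filter.coprod, tendsto_sup]
  exact ⟨tendsto_atTop_mono (fun p => le_add_of_nonneg_right (hg₀ p.2)) (hf.comp tendsto_comap),
    tendsto_atTop_mono (fun p => le_add_of_nonneg_left (hf₀ p.1)) (hg.comp tendsto_comap)⟩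

theorem tendsto_slide_cocompact [FiniteDimensional ℝ F] {u : F} (hu : u ≠ 0) :
    Tendsto (fun p => (slide u p, slide (-u) p)) (cocompact (F × ℝ)) (cocompact (F × F)) := by
  refine (LinearMap.isClosedEmbedding_of_injective
    (f := ((slide u).prod (slide (-u)) : F × ℝ →ₗ[ℝ] F × F))
    (LinearMap.ker_eq_bot.2 ?_)).tendsto_cocompact
  rintro ⟨x, r⟩ ⟨x', r'⟩ h
  obtain ⟨hadd, hsub⟩ : x + r • u = x' + r' • u ∧ x + -(r • u) = x' + -(r' • u) := by
    simpa using h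
  have hru : (r - r') • u = 0 := by
    linear_combination (norm := module) (1 / 2 : ℝ) • hadd - (1 / 2 : ℝ) • hsub
  obtain rfl : r = r' := sub_eq_zero.1 ((smul_eq_zero.1 hru).resolve_right hu)
  simpa using hadd

theorem IsLyapunov.mirror [DecidableEq ι] [FiniteDimensional ℝ F] (hχ : IsLyapunov v B χ)
    (hj : v j ≠ 0) (hB : ∀ p (r : ℝ), B (p + r • v j) = B p) :
    IsLyapunov (mirrorDir v j) (fun p => (B p.1, 0))
      (χ ∘ slide (v j) + χ ∘ slide (-v j)) where
  contDiff := (hχ.contDiff.comp (slide _).contDiff).add (hχ.contDiff.comp (slide _).contDiff)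
  nonneg p := add_nonneg (hχ.nonneg _) (hχ.nonneg _)
  coercive := (tendsto_add_cocompact_prod_atTop hχ.nonneg hχ.nonneg hχ.coercive
    hχ.coercive).comp (tendsto_slide_cocompact hj)
  diffusion_le := by
    obtain ⟨C, hC, hχC⟩ := hχ.diffusion_le
    refine ⟨C + C, add_nonneg hC hC, fun p => ?_⟩
    rw [diffusion_add (hχ.contDiff.comp (slide _).contDiff)
      (hχ.contDiff.comp (slide _).contDiff),
      diffusion_mirrorDir_comp_slide (.inl rfl) hχ.contDiff,
      diffusion_mirrorDir_comp_slide (.inr rfl) hχ.contDiff]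
    refine add_le_add ?_ ?_
    · simpa [hB] using hχC (slide (v j) p)
    · have := hB p.1 (-p.2)
      simpa [← this] using hχC (slide (-v j) p)

/-- The bounded solution of `δ h - h'' = 2 K` on `[0, ∞)` with `h 0 = 0`. -/
def barrier (δ K r : ℝ) : ℝ := 2 * K / δ * (1 - Real.exp (-(√δ * r)))

theorem contDiff_barrier : ContDiff ℝ 2 (barrier δ K) := by
  unfold barrier
  fun_prop

theorem deriv_deriv_barrier (hδ : 0 < δ) (r : ℝ) :
    deriv (deriv (barrier δ K)) r = δ * barrier δ K r - 2 * K := by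
  have hexp (t : ℝ) : HasDerivAt (fun t => Real.exp (-(√δ * t)))
      (-√δ * Real.exp (-(√δ * t))) t := by
    simpa [mul_comm] using ((hasDerivAt_id t).const_mul √δ).neg.exp
  have hderiv : deriv (barrier δ K) = fun t => 2 * K / δ * (√δ * Real.exp (-(√δ * t))) :=
    funext fun t => by
      have hbarrier : HasDerivAt (barrier δ K) _ t :=
        ((hexp t).const_sub 1).const_mul (2 * K / δ)
      rw [hbarrier.deriv]
      ring
  have hδ' : √δ * √δ = δ := Real.mul_self_sqrt hδ.le
  rw [hderiv, (((hexp r).const_mul √δ).const_mul (2 * K / δ)).deriv, barrier]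
  field_simp
  linear_combination (-K * Real.exp (-(√δ * r))) * hδ'

theorem barrier_nonneg (hδ : 0 < δ) (hK : 0 ≤ K) {r : ℝ} (hr : 0 ≤ r) : 0 ≤ barrier δ K r := by
  have : Real.exp (-(√δ * r)) ≤ 1 := Real.exp_le_one_iff.2 (neg_nonpos.2 (by positivity))
  exact mul_nonneg (by positivity) (sub_nonneg.2 this)

theorem mul_barrier_le (hδ : 0 < δ) (hK : 0 ≤ K) (r : ℝ) :
    δ * barrier δ K r ≤ 2 * K * (√δ * r) := by
  calc δ * barrier δ K r = 2 * K * (1 - Real.exp (-(√δ * r))) := by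
        unfold barrier
        field_simp
    _ ≤ 2 * K * (√δ * r) :=
        mul_le_mul_of_nonneg_left (by linarith [Real.one_sub_le_exp_neg (√δ * r)])
          (by positivity)

theorem IsPenalizedSolution.mul_reflection_sub_le [DecidableEq ι]
    (hw : IsPenalizedSolution v B δ f w) (hf : ∀ p, |f p| ≤ K)
    (hB : ∀ p (r : ℝ), B (p + r • v j) = B p) (p : F × ℝ) :
    δ * (w ∘ slide (v j) - w ∘ slide (-v j)) p ≤
      diffusion (mirrorDir v j) (B p.1, 0) (w ∘ slide (v j) - w ∘ slide (-v j)) p + 2 * K := by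
  have hslide (u : F) : ContDiff ℝ 2 (w ∘ slide u) := hw.contDiff.comp (slide u).contDiff
  have hplus := hw.eqn (slide (v j) p)
  have hminus := hw.eqn (slide (-v j) p)
  have hBplus : B (slide (v j) p) = B p.1 := hB p.1 p.2
  have hBminus : B (slide (-v j) p) = B p.1 := by simpa using hB p.1 (-p.2)
  rw [hBplus] at hplus
  rw [hBminus] at hminus
  rw [diffusion_sub (hslide _) (hslide _), diffusion_mirrorDir_comp_slide (.inl rfl) hw.contDiff,
    diffusion_mirrorDir_comp_slide (.inr rfl) hw.contDiff, ← hplus, ← hminus]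
  have := (neg_le_abs _).trans (hf (slide (v j) p))
  have := (le_abs_self _).trans (hf (slide (-v j) p))
  simp only [Pi.sub_apply, Function.comp_apply]
  linarith

/-- Since opposite displacements have the same second derivative, the difference of the two mirror
copies solves an inequality for which the barrier in the separation `r` is a supersolution. -/
theorem IsPenalizedSolution.reflection_le [FiniteDimensional ℝ F]
    (hw : IsPenalizedSolution v B δ f w) (hχ : IsLyapunov v B χ) (hδ : 0 < δ)
    (hf : ∀ p, |f p| ≤ K) (hj : v j ≠ 0) (hB : ∀ p (r : ℝ), B (p + r • v j) = B p) (p : F)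
    {r : ℝ} (hr : 0 ≤ r) :
    δ * (w (p + r • v j) - w (p - r • v j)) ≤ 2 * K * (√δ * r) := by
  classical
  rcases hr.eq_or_lt with rfl | hr
  · simp
  have hK : 0 ≤ K := (abs_nonneg _).trans (hf p)
  obtain ⟨M, hM⟩ := hw.bounded
  let gap : F × ℝ → ℝ := w ∘ slide (v j) - w ∘ slide (-v j)
  have hgap : ContDiff ℝ 2 gap :=
    (hw.contDiff.comp (slide _).contDiff).sub (hw.contDiff.comp (slide _).contDiff)
  have hbarrier : ContDiff ℝ 2 (barrier δ K ∘ Prod.snd : F × ℝ → ℝ) :=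
    contDiff_barrier.comp contDiff_snd
  suffices hle : δ * (gap - barrier δ K ∘ Prod.snd : F × ℝ → ℝ) (p, r) ≤ 0 by
    have := mul_barrier_le hδ hK r
    simp only [gap, Pi.sub_apply, Function.comp_apply, slide_apply, smul_neg, ← sub_eq_add_neg,
      mul_sub] at hle ⊢
    linarith
  refine (hχ.mirror hj hB).mul_le_of_le_diffusion (w := gap - barrier δ K ∘ Prod.snd)
    (Ω := {q | 0 < q.2}) (M := M + M) (isOpen_lt continuous_const continuous_snd) hδ
    (hgap.sub hbarrier)
    (fun q hq => ?_) (fun q hq => ?_) (fun q _ => ?_) (subset_closure hr)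
  · have := barrier_nonneg hδ hK (closure_lt_subset_le continuous_const continuous_snd hq)
    have := (le_abs_self _).trans (hM (slide (v j) q))
    have := (neg_le_abs _).trans (hM (slide (-v j) q))
    simp only [gap, Pi.sub_apply, Function.comp_apply]
    linarith
  · have : q.2 = 0 := (frontier_lt_subset_eq continuous_const continuous_snd hq).symm
    simp [gap, barrier, this]
  · have hsub : δ * gap q ≤ diffusion (mirrorDir v j) (B q.1, 0) gap q + 2 * K :=
      hw.mul_reflection_sub_le hf hB q
    rw [diffusion_sub hgap hbarrier, diffusion_mirrorDir_comp_snd contDiff_barrier,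
      deriv_deriv_barrier hδ]
    simp only [Pi.sub_apply, Function.comp_apply]
    linarith

theorem IsPenalizedSolution.abs_reflection_le [FiniteDimensional ℝ F]
    (hw : IsPenalizedSolution v B δ f w) (hχ : IsLyapunov v B χ) (hδ : 0 < δ)
    (hf : ∀ p, |f p| ≤ K) (hj : v j ≠ 0) (hB : ∀ p (r : ℝ), B (p + r • v j) = B p) (p : F)
    (r : ℝ) : |δ * (w (p + r • v j) - w (p - r • v j))| ≤ 2 * K * (√δ * |r|) := by
  have hneg : ∀ p, |((-1 : ℝ) • f) p| ≤ K := by simpa using hf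
  have hle {r : ℝ} (hr : 0 ≤ r) :
      |δ * (w (p + r • v j) - w (p - r • v j))| ≤ 2 * K * (√δ * r) := by
    have hminus := (hw.const_smul (-1)).reflection_le hχ hδ hneg hj hB p hr
    simp only [Pi.smul_apply, smul_eq_mul] at hminus
    exact abs_le'.2 ⟨hw.reflection_le hχ hδ hf hj hB p hr, by linarith⟩
  rcases abs_choice r with hr | hr
  · simpa only [hr] using hle (abs_nonneg r)
  · rw [← abs_neg, ← mul_neg, neg_sub]
    simpa only [hr, neg_smul, ← sub_eq_add_neg, sub_neg_eq_add] using hle (abs_nonneg r)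

theorem IsPenalizedSolution.abs_mul_sub_le [FiniteDimensional ℝ F]
    (hw : IsPenalizedSolution v B δ f w) (hχ : IsLyapunov v B χ) (hδ : 0 < δ)
    (hf : ∀ p, |f p| ≤ K) (hj : v j ≠ 0) (hB : ∀ p (r : ℝ), B (p + r • v j) = B p) (p : F)
    (r : ℝ) : |δ * (w (p + r • v j) - w p)| ≤ K * |r| * √δ := by
  have h := hw.abs_reflection_le hχ hδ hf hj hB (p + (r / 2) • v j) (r / 2)
  rw [add_assoc, ← add_smul, add_halves, add_sub_cancel_right, abs_div, abs_two] at h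
  linarith

end Reflection

section Shear

variable {E ι : Type*} [NormedAddCommGroup E] [InnerProductSpace ℝ E]

/-- The drift `β(s) (∂_s + ∂_e)` on `ℝ × E`. -/
def transportField (e : E) (β : ℝ → ℝ) (p : ℝ × E) : ℝ × E := β p.1 • (1, e)

theorem transportField_add (e : E) (β : ℝ → ℝ) (p : ℝ × E) (z : E) :
    transportField e β (p + (0, z)) = transportField e β p := by
  simp [transportField]

/-- In the coordinates `(s, y - s e)` the drift becomes `β(s) ∂_s`, which points to `{s = 0}`. -/
theorem exists_isLyapunov_transportField [FiniteDimensional ℝ E] [Fintype ι] (v : ι → ℝ × E)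
    (e : E) {β : ℝ → ℝ} (hβ : ∀ s, s * β s ≤ 0) :
    ∃ χ, IsLyapunov v (transportField e β) χ := by
  let shear : (ℝ × E) ≃L[ℝ] ℝ × E :=
    .skewProd (.refl ℝ ℝ) (.refl ℝ E) (-.toSpanSingleton ℝ e)
  let A := shear.trans (WithLp.prodContinuousLinearEquiv 2 ℝ ℝ E).symm
  refine ⟨_, .of_norm_sq A fun p => ?_⟩
  simpa [A, shear, transportField, WithLp.prod_inner_apply, mul_comm] using hβ p.1

end Shear

section Operator

theorem trace_fderiv_gradient {ι E : Type*} [Fintype ι] [NormedAddCommGroup E]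
    [InnerProductSpace ℝ E] [CompleteSpace E] (b : OrthonormalBasis ι ℝ E)
    (f : E → ℝ) (y : E) :
    LinearMap.trace ℝ E (fderiv ℝ (fun y => gradient f y) y : E →ₗ[ℝ] E) =
      ∑ i, iteratedFDeriv ℝ 2 f y fun _ => b i := by
  have hgradient : gradient f = (InnerProductSpace.toDual ℝ E).symm ∘ fderiv ℝ f := rfl
  rw [LinearMap.trace_eq_sum_inner _ b]
  refine Finset.sum_congr rfl fun i _ => ?_
  rw [iteratedFDeriv_two_apply]
  change ⟪b i, fderiv ℝ (gradient f) y (b i)⟫ = _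
  rw [hgradient, LinearIsometryEquiv.comp_fderiv]
  simp [← InnerProductSpace.toDual_symm_apply, real_inner_comm]

section Slices

variable {E G : Type*} [NormedAddCommGroup E] [NormedSpace ℝ E] [NormedAddCommGroup G]
  [NormedSpace ℝ G] {g : ℝ × E → G} {f : E → ℝ}

theorem deriv_fst_slice (hg : Differentiable ℝ g) (s : ℝ) (y : E) :
    deriv (fun s' => g (s', y)) s = fderiv ℝ g (s, y) (1, 0) :=
  ((hg (s, y)).hasFDerivAt.comp_hasDerivAt s
    ((hasDerivAt_id s).prodMk (hasDerivAt_const s y))).deriv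

theorem fderiv_snd_slice (hg : Differentiable ℝ g) (s : ℝ) (y z : E) :
    fderiv ℝ (fun y' => g (s, y')) y z = fderiv ℝ g (s, y) (0, z) := by
  have h := (hg (s, y)).hasFDerivAt.comp y (hasFDerivAt_prodMk_right s y)
  exact congrArg (· z) h.fderiv

theorem differentiable_fderiv_apply (hf : ContDiff ℝ 2 f) (a : E) :
    Differentiable ℝ fun x => fderiv ℝ f x a :=
  ((hf.fderiv_right (m := 1) le_rfl).differentiable one_ne_zero).clm_apply
    (differentiable_const a)

theorem fderiv_fderiv_apply (hf : ContDiff ℝ 2 f) (x a c : E) :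
    fderiv ℝ (fun x => fderiv ℝ f x a) x c = fderiv ℝ (fderiv ℝ f) x c a := by
  have h := (hf.fderiv_right (m := 1) le_rfl).differentiable one_ne_zero x
  simp [fderiv_clm_apply h (differentiableAt_const a)]

end Slices

variable {d : ℕ} {w : ℝ × Euc d → ℝ}

theorem dSS_eq (hw : ContDiff ℝ 2 w) (s : ℝ) (y : Euc d) :
    dSS w s y = fderiv ℝ (fderiv ℝ w) (s, y) (1, 0) (1, 0) := by
  simp only [dSS, deriv_fst_slice (hw.differentiable two_ne_zero),
    deriv_fst_slice (differentiable_fderiv_apply hw _), fderiv_fderiv_apply hw]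

theorem mixedDeriv_eq (hw : ContDiff ℝ 2 w) (e : Euc d) (s : ℝ) (y : Euc d) :
    mixedDeriv e w s y = fderiv ℝ (fderiv ℝ w) (s, y) (0, e) (1, 0) := by
  simp only [mixedDeriv, deriv_fst_slice (hw.differentiable two_ne_zero),
    inner_gradient_right, fderiv_snd_slice (differentiable_fderiv_apply hw _),
    fderiv_fderiv_apply hw, conj_trivial]

theorem lapY_eq (b : OrthonormalBasis (Fin d) ℝ (Euc d)) (hw : ContDiff ℝ 2 w) (s : ℝ)
    (y : Euc d) : lapY w s y = ∑ i, fderiv ℝ (fderiv ℝ w) (s, y) (0, b i) (0, b i) := by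
  have hslice : ContDiff ℝ 2 fun z => w (s, z) := hw.comp (contDiff_prodMk_right s)
  rw [lapY, clTrace, trace_fderiv_gradient b]
  refine Finset.sum_congr rfl fun i _ => ?_
  have hcomp : (fun z => fderiv ℝ (fun z => w (s, z)) z (b i)) =
      fun z => fderiv ℝ w (s, z) (0, b i) :=
    funext fun z => fderiv_snd_slice (hw.differentiable two_ne_zero) s z (b i)
  rw [iteratedFDeriv_two_apply, ← fderiv_fderiv_apply hslice, hcomp,
    fderiv_snd_slice (differentiable_fderiv_apply hw _), fderiv_fderiv_apply hw]

/-- The directions `(1, e)` and `(0, τ)`, for `e = b i₀` and `τ` another vector of the basis,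
which diagonalize the second order operator `∂²_s + 2 ∂_s ∂_e + Δ_y`. -/
def charDir (b : OrthonormalBasis (Fin d) ℝ (Euc d)) (i₀ i : Fin d) : ℝ × Euc d :=
  (if i = i₀ then 1 else 0, b i)

theorem second_order_eq (b : OrthonormalBasis (Fin d) ℝ (Euc d)) (i₀ : Fin d)
    (hw : ContDiff ℝ 2 w) (s : ℝ) (y : Euc d) :
    dSS w s y + 2 * mixedDeriv (b i₀) w s y + lapY w s y =
      ∑ i, iteratedFDeriv ℝ 2 w (s, y) fun _ => charDir b i₀ i := by
  have hsymm : IsSymmSndFDerivAt ℝ w (s, y) := hw.contDiffAt.isSymmSndFDerivAt (by simp)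
  have hdir (i : Fin d) : iteratedFDeriv ℝ 2 w (s, y) (fun _ => charDir b i₀ i) =
      (if i = i₀ then dSS w s y + 2 * mixedDeriv (b i₀) w s y else 0) +
        fderiv ℝ (fderiv ℝ w) (s, y) (0, b i) (0, b i) := by
    rw [iteratedFDeriv_two_apply, dSS_eq hw, mixedDeriv_eq hw]
    by_cases hi : i = i₀
    · subst hi
      have hsplit : charDir b i i = (1, 0) + (0, b i) := by simp [charDir]
      simp only [hsplit, map_add, _root_.add_apply, if_true, hsymm.eq (1, 0) (0, b i)]
      ring
    · simp [charDir, hi]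
  simp only [hdir, Finset.sum_add_distrib, Finset.sum_ite_eq', Finset.mem_univ, if_true,
    lapY_eq b hw]

theorem transport_eq (hw : Differentiable ℝ w) (e : Euc d) (s : ℝ) (y : Euc d) :
    dS w s y + ⟪e, gradY w s y⟫ = fderiv ℝ w (s, y) (1, e) := by
  rw [dS, deriv_fst_slice hw, gradY, inner_gradient_right, fderiv_snd_slice hw, conj_trivial,
    ← map_add]
  simp

theorem diffusion_charDir_eq (b : OrthonormalBasis (Fin d) ℝ (Euc d)) (i₀ : Fin d)
    (hw : ContDiff ℝ 2 w) (β : ℝ → ℝ) (s : ℝ) (y : Euc d) :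
    diffusion (charDir b i₀) (transportField (b i₀) β (s, y)) w (s, y) =
      dSS w s y + 2 * mixedDeriv (b i₀) w s y + lapY w s y +
        β s * (dS w s y + ⟪b i₀, gradY w s y⟫) := by
  rw [second_order_eq b i₀ hw, transport_eq (hw.differentiable two_ne_zero), diffusion,
    transportField, map_smul, smul_eq_mul]

end Operator

section Averaging

variable {d : ℕ}

theorem unitCube_eq_parallelepiped :
    unitCube d = parallelepiped (EuclideanSpace.basisFun (Fin d) ℝ) := by
  ext x
  rw [mem_parallelepiped_iff]
  constructor
  · intro hx
    refine ⟨fun i => x i, ⟨fun i => (hx i).1, fun i => (hx i).2⟩, ?_⟩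
    ext i
    simp [Finset.sum_apply, Pi.single_apply]
  · rintro ⟨t, ht, rfl⟩ i
    simpa [Finset.sum_apply, Pi.single_apply] using ⟨ht.1 i, ht.2 i⟩

theorem volume_unitCube : volume (unitCube d) = 1 := by
  rw [unitCube_eq_parallelepiped]
  exact (EuclideanSpace.basisFun (Fin d) ℝ).volume_parallelepiped

theorem isCompact_unitCube : IsCompact (unitCube d) := by
  rw [unitCube_eq_parallelepiped, parallelepiped]
  exact isCompact_Icc.image (by fun_prop)

theorem isIntVec_of_mem_span {z : Euc d}
    (hz : z ∈ Submodule.span ℤ (range (EuclideanSpace.basisFun (Fin d) ℝ).toBasis)) :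
    IsIntVec z := by
  intro i
  obtain ⟨n, hn⟩ := (Module.Basis.mem_span_iff_repr_mem ℤ _ z).1 hz i
  exact ⟨n, by simpa using hn.symm⟩

open scoped Pointwise in
theorem setIntegral_unitCube_add {G : Type*} [NormedAddCommGroup G] [NormedSpace ℝ G]
    {f : Euc d → G} (hf : ∀ y z, IsIntVec z → f (y + z) = f y) (y : Euc d) :
    ∫ z in unitCube d, f (y + z) = ∫ z in unitCube d, f z := by
  let e := (EuclideanSpace.basisFun (Fin d) ℝ).toBasis
  let D := ZSpan.fundamentalDomain e
  have hae : D =ᵐ[volume] unitCube d := by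
    rw [unitCube_eq_parallelepiped]
    simpa [D, e] using ZSpan.fundamentalDomain_ae_parallelepiped e volume
  have hdom := ZSpan.isAddFundamentalDomain' e (volume : Measure (Euc d))
  have : Countable (Submodule.span ℤ (range e)).toAddSubgroup :=
    inferInstanceAs (Countable (Submodule.span ℤ (range e)))
  calc ∫ z in unitCube d, f (y + z) = ∫ z in D, f (y + z) := (setIntegral_congr_set hae).symm
    _ = ∫ z in (y +ᵥ D : Set (Euc d)), f z :=
      ((measurePreserving_add_left volume y).setIntegral_image_emb
        (measurableEmbedding_addLeft y) f D).symm
    _ = ∫ z in D, f z := (hdom.vadd_of_comm y).setIntegral_eq hdom fun g x => by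
      rw [AddSubgroup.vadd_def, vadd_eq_add, add_comm]
      exact hf x g (isIntVec_of_mem_span g.2)
    _ = ∫ z in unitCube d, f z := setIntegral_congr_set hae

open BoundedContinuousFunction

theorem zero_mem_closure_convexHull_of_integral_eq_zero {X : Type*} [TopologicalSpace X]
    {M : Euc d → X →ᵇ ℝ} (hM : Continuous M) (hint : ∀ p, ∫ z in unitCube d, M z p = 0) :
    0 ∈ closure (convexHull ℝ (range M)) := by
  have hMint : IntegrableOn M (unitCube d) :=
    hM.continuousOn.integrableOn_compact isCompact_unitCube
  have hzero : ∫ z in unitCube d, M z = 0 := by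
    ext p
    exact ((evalCLM ℝ p).integral_comp_comm hMint).symm.trans (hint p)
  have hmem := (convex_convexHull ℝ (range M)).set_average_mem_closure (μ := volume)
    (t := unitCube d) (f := M) (by simp [volume_unitCube]) (by simp [volume_unitCube])
    (.of_forall fun z => subset_convexHull ℝ _ (mem_range_self z)) hMint
  rwa [setAverage_eq, hzero, smul_zero] at hmem

theorem continuous_compContinuous_addRight {F : Type*} [NormedAddCommGroup F] {f : F →ᵇ ℝ}
    (hf : UniformContinuous f) :
    Continuous fun z => f.compContinuous (ContinuousMap.addRight z) := by
  rw [continuous_iff_continuousAt]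
  intro z
  refine tendsto_iff_tendstoUniformly.2 (Metric.tendstoUniformly_iff.2 fun ε hε => ?_)
  obtain ⟨η, hη, hfη⟩ := Metric.uniformContinuous_iff.1 hf ε hε
  filter_upwards [Metric.ball_mem_nhds z hη] with z' hz' p
  exact hfη (by simpa [dist_comm] using hz')

theorem exists_small_mem_convexHull_translates {m : ℝ × Euc d → ℝ} {K : ℝ}
    (hbdd : ∀ p, |m p| ≤ K) (hm : UniformContinuous m)
    (hper : ∀ (s : ℝ) (y z : Euc d), IsIntVec z → m (s, y + z) = m (s, y))
    (hmean : ∀ s : ℝ, (∫ y in unitCube d, m (s, y)) = 0) {ε : ℝ} (hε : 0 < ε) :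
    ∃ g ∈ convexHull ℝ (range fun (z : Euc d) (p : ℝ × Euc d) => m (p + (0, z))),
      ∀ p, |g p| ≤ ε := by
  let f : ℝ × Euc d →ᵇ ℝ := .ofNormedAddCommGroup m hm.continuous K hbdd
  let M (z : Euc d) : ℝ × Euc d →ᵇ ℝ := f.compContinuous (ContinuousMap.addRight (0, z))
  have hM : Continuous M :=
    (continuous_compContinuous_addRight (f := f) hm).comp (Continuous.prodMk_right 0)
  have hint (p : ℝ × Euc d) : ∫ z in unitCube d, M z p = 0 := by
    simpa [M, f, hmean, Prod.add_def] using
      setIntegral_unitCube_add (f := fun y => m (p.1, y)) (hper p.1) p.2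
  obtain ⟨g, hg, hgε⟩ := Metric.mem_closure_iff.1
    (zero_mem_closure_convexHull_of_integral_eq_zero hM hint) ε hε
  refine ⟨g, ?_, fun p => ?_⟩
  · have hcoe := mem_image_of_mem (fun h : ℝ × Euc d →ᵇ ℝ => (h : ℝ × Euc d → ℝ)) hg
    rwa [IsLinearMap.image_convexHull ⟨fun _ _ => rfl, fun _ _ => rfl⟩, ← range_comp] at hcoe
  · rw [dist_zero_left] at hgε
    exact (g.norm_coe_le_norm p).trans hgε.le

end Averaging

section AsymptoticPeriods

theorem tendstoUniformly_zero_iff {ι X : Type*} {l : Filter ι} {u : ι → X → ℝ} :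
    TendstoUniformly u 0 l ↔ ∀ η > 0, ∀ᶠ i in l, ∀ x, |u i x| ≤ η := by
  simp only [Metric.tendstoUniformly_iff, Pi.zero_apply, dist_zero_left, Real.norm_eq_abs]
  refine ⟨fun h η hη => (h η hη).mono fun i hi x => (hi x).le, fun h ε hε => ?_⟩
  exact (h (ε / 2) (half_pos hε)).mono fun i hi x => (hi x).trans_lt (half_lt_self hε)

variable {E ι : Type*} [NormedAddCommGroup E] [Fintype ι] {v : ι → ℝ × E}
  {B : ℝ × E → ℝ × E} {χ f : ℝ × E → ℝ} {V : ℝ → ℝ × E → ℝ}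

/-- The translations `z` of the second variable under which the family `δ V δ` is asymptotically
invariant as `δ → 0⁺`, uniformly. -/
def asymptoticPeriods (V : ℝ → ℝ × E → ℝ) : AddSubgroup E where
  carrier := {z | TendstoUniformly (fun δ p => δ * (V δ (p + (0, z)) - V δ p)) 0 (𝓝[>] 0)}
  zero_mem' := by
    have hzero : ((0 : ℝ), (0 : E)) = 0 := rfl
    simpa [hzero] using tendstoUniformly_zero_iff.2 fun η hη => by simp [hη.le]
  add_mem' {z z'} hz hz' := by
    have hadd := (hz'.comp fun p => p + (0, z)).add hz
    simpa [Function.comp_def, Pi.add_def, ← Pi.zero_def, ← mul_add, add_assoc] using hadd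
  neg_mem' {z} hz := by
    have hzero : ((0 : ℝ), (0 : E)) = 0 := rfl
    have hneg := (hz.comp fun p => p + (0, -z)).neg
    simpa [Function.comp_def, Pi.neg_def, ← Pi.zero_def, ← mul_neg, add_assoc, hzero] using hneg

theorem mem_asymptoticPeriods {z : E} : z ∈ asymptoticPeriods V ↔
    TendstoUniformly (fun δ p => δ * (V δ (p + (0, z)) - V δ p)) 0 (𝓝[>] 0) :=
  Iff.rfl

variable [NormedSpace ℝ E]

theorem isClosed_asymptoticPeriods (hχ : IsLyapunov v B χ)
    (hB : ∀ p z, B (p + (0, z)) = B p) (hV : ∀ δ > 0, IsPenalizedSolution v B δ f (V δ))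
    (hf : UniformContinuous f) : IsClosed (asymptoticPeriods V : Set E) := by
  refine isClosed_of_closure_subset fun z hz => tendstoUniformly_zero_iff.2 fun η hη => ?_
  obtain ⟨ρ, hρ, hfρ⟩ := Metric.uniformContinuous_iff.1 hf (η / 2) (half_pos hη)
  obtain ⟨z', hz', hzz'⟩ := Metric.mem_closure_iff.1 hz ρ hρ
  filter_upwards [tendstoUniformly_zero_iff.1 (mem_asymptoticPeriods.1 hz') _ (half_pos hη),
    eventually_mem_nhdsWithin] with δ hδz' hδ p
  have hdiff := ((hV δ hδ).translate fun p => hB p z).add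
    (((hV δ hδ).translate fun p => hB p z').const_smul (-1))
  have hle := hdiff.abs_mul_le hχ hδ (K := η / 2) (fun p => by
    have := (hfρ (a := p + (0, z)) (b := p + (0, z')) (by simpa [Prod.dist_eq] using hzz')).le
    simpa [Real.dist_eq, ← sub_eq_add_neg] using this) p
  calc |δ * (V δ (p + (0, z)) - V δ p)|
      = |δ * (V δ (p + (0, z)) - V δ (p + (0, z'))) + δ * (V δ (p + (0, z')) - V δ p)| := by
        ring_nf
    _ ≤ η / 2 + η / 2 := (abs_add_le _ _).trans
        (add_le_add (by simpa [← sub_eq_add_neg] using hle) (hδz' p))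
    _ = η := add_halves η

theorem smul_mem_asymptoticPeriods [FiniteDimensional ℝ E] {K : ℝ}
    (hχ : IsLyapunov v B χ) (hB : ∀ p z, B (p + (0, z)) = B p)
    (hV : ∀ δ > 0, IsPenalizedSolution v B δ f (V δ)) (hf : ∀ p, |f p| ≤ K) {j : ι} {z : E}
    (hj : v j = (0, z)) (hz : z ≠ 0) (t : ℝ) : t • z ∈ asymptoticPeriods V := by
  refine tendstoUniformly_zero_iff.2 fun η hη => ?_
  have hlim : Tendsto (fun δ => K * |t| * √δ) (𝓝[>] 0) (𝓝 0) := by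
    have : Continuous fun δ => K * |t| * √δ := by fun_prop
    simpa using (this.tendsto 0).mono_left nhdsWithin_le_nhds
  filter_upwards [hlim.eventually_le_const hη, eventually_mem_nhdsWithin] with δ hδη hδ p
  have hle := (hV δ hδ).abs_mul_sub_le hχ hδ hf (j := j) (by simpa [hj] using hz)
    (fun p r => by simpa [hj] using hB p (r • z)) p t
  simpa [hj] using hle.trans hδη

/-- The right-hand sides that admit solutions asymptotically equal to `V` form a convex set, so
they include the small averages of `f`. -/
theorem tendstoUniformly_of_small_averages (hχ : IsLyapunov v B χ)
    (hB : ∀ p z, B (p + (0, z)) = B p) (hV : ∀ δ > 0, IsPenalizedSolution v B δ f (V δ))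
    (hperiods : asymptoticPeriods V = ⊤)
    (havg : ∀ ε > 0, ∃ g ∈ convexHull ℝ (range fun (z : E) (p : ℝ × E) => f (p + (0, z))),
      ∀ p, |g p| ≤ ε) :
    TendstoUniformly (fun δ p => δ * V δ p) 0 (𝓝[>] 0) := by
  let S : Set (ℝ × E → ℝ) := {g | ∃ w : ℝ → ℝ × E → ℝ,
    (∀ δ > 0, IsPenalizedSolution v B δ g (w δ)) ∧
      TendstoUniformly (fun δ p => δ * (w δ p - V δ p)) 0 (𝓝[>] 0)}
  have hconvex : Convex ℝ S := by
    rintro f ⟨w, hw, hwV⟩ g ⟨u, hu, huV⟩ k l _ _ hkl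
    refine ⟨fun δ => k • w δ + l • u δ,
      fun δ hδ => ((hw δ hδ).const_smul k).add ((hu δ hδ).const_smul l), ?_⟩
    have hlim := ((uniformContinuous_const_smul k).comp_tendstoUniformly hwV).add
      ((uniformContinuous_const_smul l).comp_tendstoUniformly huV)
    obtain rfl : l = 1 - k := by linarith
    convert hlim using 3 with δ p
    · simp only [Function.comp_apply, Pi.add_apply, Pi.smul_apply, smul_eq_mul]
      ring
    · simp
  have htranslates : (range fun (z : E) (p : ℝ × E) => f (p + (0, z))) ⊆ S := by
    rintro _ ⟨z, rfl⟩
    exact ⟨fun δ p => V δ (p + (0, z)), fun δ hδ => (hV δ hδ).translate fun p => hB p z,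
      mem_asymptoticPeriods.1 (hperiods ▸ AddSubgroup.mem_top z)⟩
  refine tendstoUniformly_zero_iff.2 fun η hη => ?_
  obtain ⟨g, hg, hgη⟩ := havg (η / 2) (half_pos hη)
  obtain ⟨w, hw, hwV⟩ := convexHull_min htranslates hconvex hg
  filter_upwards [tendstoUniformly_zero_iff.1 hwV _ (half_pos hη), eventually_mem_nhdsWithin]
    with δ hδwV hδ p
  calc |δ * V δ p| = |δ * w δ p - δ * (w δ p - V δ p)| := by ring_nf
    _ ≤ η / 2 + η / 2 := (abs_sub _ _).trans
        (add_le_add ((hw δ hδ).abs_mul_le hχ hδ hgη p) (hδwV p))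
    _ = η := add_halves η

end AsymptoticPeriods

section Density

variable {d : ℕ}

theorem isIntVec_single (i : Fin d) : IsIntVec (EuclideanSpace.single i (1 : ℝ)) := fun j => by
  by_cases h : j = i
  · exact ⟨1, by simp [h]⟩
  · exact ⟨0, by simp [h]⟩

/-- The numbers `t` with `t • e ∈ G` include all `e i / ‖e‖ ^ 2`. As `e` is irrational, these are
not all integer multiples of one number, so such `t` are dense. -/
theorem eq_top_of_isClosed_of_not_ratDir {G : AddSubgroup (Euc d)}
    (hG : IsClosed (G : Set (Euc d))) {e : Euc d} (he : ¬ RatDir e) (hint : ∀ z, IsIntVec z → z ∈ G)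
    (hperp : ∀ z, ⟪e, z⟫ = 0 → z ∈ G) : G = ⊤ := by
  have he₀ : e ≠ 0 := fun h => he ⟨0, 0, by simp [h]⟩
  have hnorm : ‖e‖ ^ 2 ≠ 0 := by simpa using he₀
  have hproj (z : Euc d) : z - (⟪e, z⟫ / ‖e‖ ^ 2) • e ∈ G := hperp _ <| by
    rw [inner_sub_right, inner_smul_right, real_inner_self_eq_norm_sq, div_mul_cancel₀ _ hnorm,
      sub_self]
  let H : AddSubgroup ℝ := G.comap (LinearMap.toSpanSingleton ℝ (Euc d) e).toAddMonoidHom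
  have mem_H {t : ℝ} : t ∈ H ↔ t • e ∈ G := Iff.rfl
  have hH : IsClosed (H : Set ℝ) :=
    hG.preimage (f := fun t : ℝ => t • e) (by fun_prop)
  have hcoord (i : Fin d) : e i / ‖e‖ ^ 2 ∈ H := by
    simpa [mem_H, EuclideanSpace.inner_single_right] using
      sub_mem (hint _ (isIntVec_single i)) (hproj (EuclideanSpace.single i 1))
  have hH_top : H = ⊤ := by
    rcases H.dense_or_cyclic with hdense | ⟨a, ha⟩
    · exact SetLike.coe_injective (hH.closure_eq.symm.trans hdense.closure_eq)
    · refine absurd ?_ he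
      have hmultiple (i : Fin d) : ∃ n : ℤ, n • a = e i / ‖e‖ ^ 2 := by
        simpa only [ha, AddSubgroup.mem_closure_singleton] using hcoord i
      choose n hn using hmultiple
      refine ⟨‖e‖ ^ 2 * a, n, fun i => ?_⟩
      have := hn i
      rw [zsmul_eq_mul, eq_div_iff hnorm] at this
      linarith
  refine eq_top_iff.2 fun z _ => ?_
  have hline : (⟪e, z⟫ / ‖e‖ ^ 2) • e ∈ G := mem_H.1 (hH_top ▸ AddSubgroup.mem_top _)
  exact sub_add_cancel z _ ▸ add_mem (hproj z) hline

end Density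

section Correctors

variable {d : ℕ} {e : Euc d} {m : ℝ × Euc d → ℝ} {V : ℝ → ℝ × Euc d → ℝ}

theorem asymptoticPeriods_eq_top {b : OrthonormalBasis (Fin d) ℝ (Euc d)} {i₀ : Fin d}
    {β : ℝ → ℝ} {χ : ℝ × Euc d → ℝ} {K : ℝ}
    (hχ : IsLyapunov (charDir b i₀) (transportField (b i₀) β) χ)
    (hV : ∀ δ > 0, IsPenalizedSolution (charDir b i₀) (transportField (b i₀) β) δ m (V δ))
    (hbdd : ∀ p, |m p| ≤ K) (hm : UniformContinuous m) (hirr : ¬ RatDir (b i₀))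
    (hper : ∀ δ > 0, ∀ (s : ℝ) (y z : Euc d), IsIntVec z → V δ (s, y + z) = V δ (s, y)) :
    asymptoticPeriods V = ⊤ := by
  have hB := transportField_add (b i₀) β
  refine eq_top_of_isClosed_of_not_ratDir (isClosed_asymptoticPeriods hχ hB hV hm) hirr
    (fun z hz => tendstoUniformly_zero_iff.2 fun η hη => ?_) (fun z hz => ?_)
  · filter_upwards [eventually_mem_nhdsWithin] with δ hδ p
    have : V δ (p + (0, z)) = V δ p := by simpa [Prod.add_def] using hper δ hδ p.1 p.2 z hz
    simp [this, hη.le]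
  · rw [← b.sum_repr' z]
    refine sum_mem fun j _ => ?_
    by_cases hj : j = i₀
    · simp [hj, hz]
    · exact smul_mem_asymptoticPeriods hχ hB hV hbdd (j := j) (by simp [charDir, hj])
        (b.orthonormal.ne_zero j) _

theorem exists_orthonormalBasis_apply_eq {ι E : Type*} [Fintype ι] [NormedAddCommGroup E]
    [InnerProductSpace ℝ E] [FiniteDimensional ℝ E]
    (hcard : Module.finrank ℝ E = Fintype.card ι) {e : E} (he : ‖e‖ = 1) :
    ∃ (b : OrthonormalBasis ι ℝ E) (i₀ : ι), b i₀ = e := by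
  have : Nontrivial E := ⟨e, 0, norm_ne_zero_iff.1 (he ▸ one_ne_zero)⟩
  obtain ⟨i₀⟩ : Nonempty ι := Fintype.card_pos_iff.1 (hcard ▸ Module.finrank_pos)
  obtain ⟨b, hb⟩ := Orthonormal.exists_orthonormalBasis_extension_of_card_eq (𝕜 := ℝ) hcard
    (v := fun _ => e) (s := {i₀})
    ⟨fun _ => he, fun i j hij => absurd (Subsingleton.elim i j) hij⟩
  exact ⟨b, i₀, hb i₀ rfl⟩

theorem StandingWave.mul_drift_nonpos {W q : ℝ → ℝ} (hW : DoubleWell W) (hq : StandingWave W q)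
    (s : ℝ) : s * (2 * deriv (deriv q) s / deriv q s) ≤ 0 := by
  obtain ⟨-, -, -, -, -, -, -, -, hpos, hneg, -⟩ := hW
  obtain ⟨-, hmono, hrange, hq0, hode, -⟩ := hq
  have hderiv : 0 ≤ deriv q s := hmono.monotone.deriv_nonneg
  have hsign : s * deriv W (q s) ≤ 0 := by
    rcases lt_trichotomy s 0 with hs | rfl | hs
    · exact (mul_neg_of_neg_of_pos hs (hpos (q s) ⟨(hrange s).1, hq0 ▸ hmono hs⟩)).le
    · simp
    · exact (mul_neg_of_pos_of_neg hs (hneg (q s) ⟨hq0 ▸ hmono hs, (hrange s).2⟩)).le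
  rw [hode, ← mul_div_assoc]
  exact div_nonpos_of_nonpos_of_nonneg (by linarith) hderiv

theorem uniformContinuous_of_abs_sub_le_rpow {X : Type*} [PseudoMetricSpace X] {f : X → ℝ}
    {α : ℝ} (hα : 0 < α) (hf : ∃ C : ℝ, ∀ x y, |f x - f y| ≤ C * dist x y ^ α) :
    UniformContinuous f := by
  obtain ⟨C, hC⟩ := hf
  refine tendsto_uniformity_iff_dist_tendsto_zero.2 (squeeze_zero (fun _ => dist_nonneg)
    (fun x => hC x.1 x.2) ?_)
  simpa [hα.ne'] using ((tendsto_uniformity_iff_dist_tendsto_zero.1 tendsto_id).rpow_const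
    (.inr hα.le)).const_mul C

theorem penalized_correctors_converge_general (he : ‖e‖ = 1) (hirr : ¬ RatDir e)
    {β : ℝ → ℝ} (hβ : ∀ s, s * β s ≤ 0)
    (hbdd : ∃ K, ∀ p, |m p| ≤ K) (hm : UniformContinuous m)
    (hper : ∀ (s : ℝ) (y z : Euc d), IsIntVec z → m (s, y + z) = m (s, y))
    (hmean : ∀ s : ℝ, (∫ y in unitCube d, m (s, y)) = 0)
    (hV : ∀ δ > 0, (∃ M : ℝ, ∀ p, |V δ p| ≤ M) ∧ ContDiff ℝ 2 (V δ) ∧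
      (∀ (s : ℝ) (y z : Euc d), IsIntVec z → V δ (s, y + z) = V δ (s, y)) ∧
      (∀ (s : ℝ) (y : Euc d),
        m (s, y) + δ * V δ (s, y)
          - (dSS (V δ) s y + 2 * mixedDeriv e (V δ) s y + lapY (V δ) s y)
          - β s * (dS (V δ) s y + ⟪e, gradY (V δ) s y⟫) = 0)) :
    ∀ η > 0, ∃ δ₀ > 0, ∀ δ : ℝ, 0 < δ → δ < δ₀ → ∀ p : ℝ × Euc d, |δ * V δ p| ≤ η := by
  obtain ⟨K, hK⟩ := hbdd
  obtain ⟨b, i₀, rfl⟩ := exists_orthonormalBasis_apply_eq (ι := Fin d) (by simp) he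
  obtain ⟨χ, hχ⟩ := exists_isLyapunov_transportField (charDir b i₀) (b i₀) hβ
  have hsol : ∀ δ > 0,
      IsPenalizedSolution (charDir b i₀) (transportField (b i₀) β) δ m (V δ) := fun δ hδ => by
    obtain ⟨hbounded, hC2, -, heqn⟩ := hV δ hδ
    exact ⟨hbounded, hC2, fun ⟨s, y⟩ => by
      linarith [heqn s y, diffusion_charDir_eq b i₀ hC2 β s y]⟩
  have hperiods := asymptoticPeriods_eq_top hχ hsol hK hm hirr fun δ hδ => (hV δ hδ).2.2.1
  have hlim := tendstoUniformly_of_small_averages hχ (transportField_add _ β) hsol hperiods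
    fun ε hε => exists_small_mem_convexHull_translates hK hm hper hmean hε
  intro η hη
  obtain ⟨δ₀, hδ₀, hδ⟩ :=
    mem_nhdsGT_iff_exists_Ioo_subset.1 (tendstoUniformly_zero_iff.1 hlim η hη)
  exact ⟨δ₀, hδ₀, fun δ h₀ h₁ => hδ ⟨h₀, h₁⟩⟩

end Correctors

/-- Proposition 4.2: convergence of the penalized correctors. -/
theorem penalized_correctors_converge (d : ℕ) (hd : 2 ≤ d)
    (W q : ℝ → ℝ) (hW : DoubleWell W) (hq : StandingWave W q)
    (e : Euc d) (he : ‖e‖ = 1) (hirr : ¬ RatDir e)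
    (α : ℝ) (hα : α ∈ Set.Ioo (0:ℝ) 1)
    (mt : ℝ × Euc d → ℝ)
    (hmb : ∃ B : ℝ, ∀ p, |mt p| ≤ B)
    (hmper : ∀ (s : ℝ) (y z : Euc d), IsIntVec z → mt (s, y + z) = mt (s, y))
    (hmh : ∃ C : ℝ, ∀ p p' : ℝ × Euc d, |mt p - mt p'| ≤ C * dist p p' ^ α)
    (hmmean : ∀ s : ℝ, (∫ y in unitCube d, mt (s, y)) = 0)
    (V : ℝ → ℝ × Euc d → ℝ)
    (hV : ∀ δ > 0, (∃ B : ℝ, ∀ p, |V δ p| ≤ B) ∧ ContDiff ℝ 2 (V δ) ∧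
      (∀ (s : ℝ) (y z : Euc d), IsIntVec z → V δ (s, y + z) = V δ (s, y)) ∧
      (∀ (s : ℝ) (y : Euc d),
        mt (s, y) + δ * V δ (s, y)
          - (dSS (V δ) s y + 2 * mixedDeriv e (V δ) s y + lapY (V δ) s y)
          - (2 * deriv (deriv q) s / deriv q s) * (dS (V δ) s y + ⟪e, gradY (V δ) s y⟫)
          = 0)) :
    ∀ η > 0, ∃ δ₀ > 0, ∀ δ : ℝ, 0 < δ → δ < δ₀ →
      ∀ p : ℝ × Euc d, |δ * V δ p| ≤ η := by
  exact penalized_correctors_converge_general he hirr (StandingWave.mul_drift_nonpos hW hq) hmb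
    (uniformContinuous_of_abs_sub_le_rpow hα.1 hmh) hmper hmmean hV

end
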